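/- arXiv:2207.02034 — 2 statements merged into one kernel-verified Lean document; each statement's English description precedes it below -/
import Mathlib

section
/- Let R be a Hecke symmetry with parameter q, and let M be an N×N matrix with entries in a unital associative ℂ-algebra 𝒜 satisfying the Reflection Equation R M₁ R M₁ = M₁ R M₁ R. Then for every p ≥ 1 the higher-copy relations R_p M_{p̄} M_{p̄+1} − M_{p̄} M_{p̄+1} R_p = 0 hold as identities of N^{p+1}×N^{p+1} matrices over 𝒜. -/
open Matrix BigOperators

noncomputable section

/-- An `N² × N²` complex matrix, viewed as an operator on `ℂ^N ⊗ ℂ^N`. -/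
abbrev RMat (N : ℕ) := Matrix (Fin N × Fin N) (Fin N × Fin N) ℂ

/-- A matrix on the `k`-th tensor power of `ℂ^N`, with entries in `A`. -/
abbrev TMat (N k : ℕ) (A : Type _) := Matrix (Fin k → Fin N) (Fin k → Fin N) A

/-- The `q`-number `j_q = (q^j - q^{-j})/(q - q^{-1})`. -/
def qNum (q : ℂ) (j : ℕ) : ℂ := (q ^ j - q⁻¹ ^ j) / (q - q⁻¹)

/-- Embedding of an `N²×N²` matrix `R` into the `k`-th tensor power,
acting in the (0-based) tensor factors `i` and `i+1`.  The paper's `R_i`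
(1-based) is `embR k R (i-1)`. -/
def embR {N : ℕ} (k : ℕ) (R : RMat N) (i : ℕ) : TMat N k ℂ := fun f g =>
  if h : i + 1 < k then
    if ∀ j : Fin k, j.val ≠ i → j.val ≠ i + 1 → f j = g j then
      R (f ⟨i, Nat.lt_of_succ_lt h⟩, f ⟨i + 1, h⟩) (g ⟨i, Nat.lt_of_succ_lt h⟩, g ⟨i + 1, h⟩)
    else 0
  else (1 : TMat N k ℂ) f g

/-- `X ⊗ I^{⊗(k-1)}` : the first copy `X_{1̄}` of an `N×N` matrix over `A`. -/
def emb1 {N : ℕ} (k : ℕ) {A : Type _} [Ring A] (X : Matrix (Fin N) (Fin N) A) :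
    TMat N k A := fun f g =>
  if h : 0 < k then
    if ∀ j : Fin k, j.val ≠ 0 → f j = g j then X (f ⟨0, h⟩) (g ⟨0, h⟩) else 0
  else (1 : TMat N k A) f g

/-- Lift a complex matrix to a matrix over the `ℂ`-algebra `A`. -/
def liftC {N k : ℕ} (A : Type _) [Ring A] [Algebra ℂ A] (X : TMat N k ℂ) : TMat N k A :=
  X.map (algebraMap ℂ A)

/-- The copies `X_{1̄}, X_{2̄}, …` of `X` in the `k`-th tensor power:
`copyX k R Rinv X i` is the paper's `X_{\overline{i+1}}`, i.e.
`X_{1̄} = X ⊗ I^{⊗(k-1)}` and `X_{\overline{i+1}} = R_i X_{ī} R_i⁻¹`. -/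
def copyX {N : ℕ} (k : ℕ) (R Rinv : RMat N) {A : Type _} [Ring A] [Algebra ℂ A]
    (X : Matrix (Fin N) (Fin N) A) : ℕ → TMat N k A
  | 0 => emb1 k X
  | i + 1 => liftC A (embR k R i) * copyX k R Rinv X i * liftC A (embR k Rinv i)

/-- The `R`-skew-symmetrizers, on the ambient `k`-th tensor power:
`Asym k R q j` is `A^{(j)}` (acting in the first `j` factors). -/
def Asym {N : ℕ} (k : ℕ) (R : RMat N) (q : ℂ) : ℕ → TMat N k ℂ
  | 0 => 1
  | 1 => 1
  | j + 2 =>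
      (qNum q (j + 2))⁻¹ •
        (Asym k R q (j + 1) *
          ((q ^ (j + 1)) • (1 : TMat N k ℂ) - (qNum q (j + 1)) • embR k R j) *
          Asym k R q (j + 1))

/-- The `R`-symmetrizers, on the ambient `k`-th tensor power:
`Ssym k R q j` is `S^{(j)}` (acting in the first `j` factors). -/
def Ssym {N : ℕ} (k : ℕ) (R : RMat N) (q : ℂ) : ℕ → TMat N k ℂ
  | 0 => 1
  | 1 => 1
  | j + 2 =>
      (qNum q (j + 2))⁻¹ •
        (Ssym k R q (j + 1) *
          ((q⁻¹ ^ (j + 1)) • (1 : TMat N k ℂ) + (qNum q (j + 1)) • embR k R j) *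
          Ssym k R q (j + 1))

/-- The braid relation `R₁₂ R₂₃ R₁₂ = R₂₃ R₁₂ R₂₃` on `(ℂ^N)^{⊗3}`. -/
def IsBraiding {N : ℕ} (R : RMat N) : Prop :=
  embR 3 R 0 * embR 3 R 1 * embR 3 R 0 = embR 3 R 1 * embR 3 R 0 * embR 3 R 1

/-- The Hecke condition `(q·I − R)(q⁻¹·I + R) = 0`. -/
def HeckeCond {N : ℕ} (R : RMat N) (q : ℂ) : Prop :=
  (q • (1 : RMat N) - R) * (q⁻¹ • (1 : RMat N) + R) = 0

/-- The Reflection Equation `R M₁ R M₁ = M₁ R M₁ R` (on `(ℂ^N)^{⊗2}`,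
with entries in `A`). -/
def RERel {N : ℕ} (R : RMat N) {A : Type _} [Ring A] [Algebra ℂ A]
    (M : Matrix (Fin N) (Fin N) A) : Prop :=
  liftC A (embR 2 R 0) * emb1 2 M * liftC A (embR 2 R 0) * emb1 2 M
    = emb1 2 M * liftC A (embR 2 R 0) * emb1 2 M * liftC A (embR 2 R 0)

/-- The relation `R⁻¹ D₁ R⁻¹ D₁ = D₁ R⁻¹ D₁ R⁻¹` on the matrix `D`,
where `Rinv = R⁻¹`. -/
def DDRel {N : ℕ} (Rinv : RMat N) {A : Type _} [Ring A] [Algebra ℂ A]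
    (D : Matrix (Fin N) (Fin N) A) : Prop :=
  liftC A (embR 2 Rinv 0) * emb1 2 D * liftC A (embR 2 Rinv 0) * emb1 2 D
    = emb1 2 D * liftC A (embR 2 Rinv 0) * emb1 2 D * liftC A (embR 2 Rinv 0)

/-- The permutation relations `D₁ R M₁ = R M₁ R⁻¹ D₁ R⁻¹ + I`, where `Rinv = R⁻¹`. -/
def PermRel {N : ℕ} (R Rinv : RMat N) {A : Type _} [Ring A] [Algebra ℂ A]
    (M D : Matrix (Fin N) (Fin N) A) : Prop :=
  emb1 2 D * liftC A (embR 2 R 0) * emb1 2 M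
    = liftC A (embR 2 R 0) * emb1 2 M * liftC A (embR 2 Rinv 0) * emb1 2 D *
        liftC A (embR 2 Rinv 0) + 1

/-- `Ψ` is the skew-inverse of `R`:  `Σ_{j,b} R^{ij}_{ab} Ψ^{bc}_{jd} = δ^i_d δ^c_a`. -/
def SkewInv {N : ℕ} (R Ψ : RMat N) : Prop :=
  ∀ i a c d : Fin N,
    (∑ j : Fin N, ∑ b : Fin N, R (i, j) (a, b) * Ψ (b, c) (j, d))
      = if i = d ∧ c = a then 1 else 0

/-- The matrix `C`, `C^c_d = Σ_i Ψ^{ic}_{id}`. -/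
def Cmat {N : ℕ} (Ψ : RMat N) : Matrix (Fin N) (Fin N) ℂ :=
  fun c d => ∑ i : Fin N, Ψ (i, c) (i, d)

/-- The `R`-trace over all `k` tensor factors: `⟨X⟩_{1…k} = Tr(C^{⊗k} X)`. -/
def rTr {N k : ℕ} {A : Type _} [Ring A] [Algebra ℂ A] (C : Matrix (Fin N) (Fin N) ℂ)
    (X : TMat N k A) : A :=
  ∑ f : Fin k → Fin N, ∑ g : Fin k → Fin N, (∏ j : Fin k, C (f j) (g j)) • X g f

/-- The chain `X_{1̄} X_{2̄} ⋯ X_{n̄}`. -/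
def upChain {N : ℕ} (k : ℕ) (R Rinv : RMat N) {A : Type _} [Ring A] [Algebra ℂ A]
    (X : Matrix (Fin N) (Fin N) A) (n : ℕ) : TMat N k A :=
  ((List.range n).map (copyX k R Rinv X)).prod

/-- The reversed chain `X_{n̄} X_{\overline{n-1}} ⋯ X_{1̄}`. -/
def downChain {N : ℕ} (k : ℕ) (R Rinv : RMat N) {A : Type _} [Ring A] [Algebra ℂ A]
    (X : Matrix (Fin N) (Fin N) A) (n : ℕ) : TMat N k A :=
  ((List.range n).reverse.map (copyX k R Rinv X)).prod

/-- The Capelli chain `L_{1̄}(L_{2̄} + q·1_q I)(L_{3̄} + q²·2_q I) ⋯ (L_{n̄} + q^{n-1}·(n-1)_q I)`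
(note `0_q = 0`). -/
def capChainA {N : ℕ} (k : ℕ) (R Rinv : RMat N) (q : ℂ) {A : Type _} [Ring A] [Algebra ℂ A]
    (L : Matrix (Fin N) (Fin N) A) (n : ℕ) : TMat N k A :=
  ((List.range n).map
    (fun i => copyX k R Rinv L i + ((q ^ i) * qNum q i) • (1 : TMat N k A))).prod

/-- The symmetric Capelli chain
`L_{1̄}(L_{2̄} - q⁻¹·1_q I) ⋯ (L_{n̄} - q^{-(n-1)}·(n-1)_q I)`. -/
def capChainS {N : ℕ} (k : ℕ) (R Rinv : RMat N) (q : ℂ) {A : Type _} [Ring A] [Algebra ℂ A]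
    (L : Matrix (Fin N) (Fin N) A) (n : ℕ) : TMat N k A :=
  ((List.range n).map
    (fun i => copyX k R Rinv L i - ((q⁻¹ ^ i) * qNum q i) • (1 : TMat N k A))).prod

/-- The descending chain `R_{a→b} = R_a R_{a-1} ⋯ R_b` (1-based indices;
identity when `b > a`). -/
def rChainDesc {N : ℕ} (k : ℕ) (R : RMat N) (a b : ℕ) : TMat N k ℂ :=
  ((List.range' b (a + 1 - b)).reverse.map (fun j => embR k R (j - 1))).prod

/-- The ascending chain `R_{b→a} = R_b R_{b+1} ⋯ R_a` (1-based indices;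
identity when `b > a`). -/
def rChainAsc {N : ℕ} (k : ℕ) (R : RMat N) (b a : ℕ) : TMat N k ℂ :=
  ((List.range' b (a + 1 - b)).map (fun j => embR k R (j - 1))).prod

/-!
Put `x = R_i R_{i+1}`. The braid relation says that conjugation by `x` turns `R_i` into `R_{i+1}`;
since `M_{ī}` commutes with `R_{i+1}`, it also turns `M_{ī}` into `R_i M_{ī} R_i⁻¹`, the next copy.
So conjugation by `x` carries the reflection equation for `(R_i, M_{ī})` to the one for the next
index, and the higher relation is the reflection equation for `(R_p, M_{p̄})` multiplied by `R_p⁻¹`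
on the right.
-/

section ReflectionEq

/-- The reflection equation for a pair of elements: `RERel R M` is this relation between `R` and
`M ⊗ I`. It is stated abstractly so that it can be transported by homomorphisms and conjugations. -/
def ReflectionEq {S : Type*} [Mul S] (r m : S) : Prop := r * m * r * m = m * r * m * r

theorem ReflectionEq.map {S T F : Type*} [Mul S] [Mul T] [FunLike F S T] [MulHomClass F S T]
    (f : F) {r m : S} (h : ReflectionEq r m) : ReflectionEq (f r) (f m) := by
  simpa only [ReflectionEq, map_mul] using congrArg f h

theorem semiconjBy_mul_of_braid {S : Type*} [Semigroup S] {a b : S}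
    (h : a * b * a = b * a * b) : SemiconjBy (a * b) a b :=
  h.trans (mul_assoc b a b)

variable {S : Type*} [Monoid S]

theorem ReflectionEq.of_semiconjBy {x r r' m m' : S} (hx : IsUnit x) (hr : SemiconjBy x r r')
    (hm : SemiconjBy x m m') (h : ReflectionEq r m) : ReflectionEq r' m' := by
  refine hx.mul_right_cancel ?_
  calc r' * m' * r' * m' * x = x * (r * m * r * m) :=
        (((hr.mul_right hm).mul_right hr).mul_right hm).eq.symm
    _ = x * (m * r * m * r) := by rw [h]
    _ = m' * r' * m' * r' * x := (((hm.mul_right hr).mul_right hm).mul_right hr).eq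

theorem ReflectionEq.commute_mul_conj {r s m : S} (hrs : r * s = 1) (hsr : s * r = 1)
    (h : ReflectionEq r m) : Commute r (m * (r * m * s)) :=
  calc r * (m * (r * m * s)) = r * m * r * m * s := by simp only [mul_assoc]
    _ = m * r * m * r * s := by rw [h]
    _ = m * (r * m * s) * r := by simp only [mul_assoc, hrs, hsr]

theorem semiconjBy_conj_of_mul_eq_one {a b : S} (h : b * a = 1) (m : S) :
    SemiconjBy a m (a * m * b) := by
  rw [SemiconjBy, mul_assoc _ b a, h, mul_one]

end ReflectionEq

section ActOn

variable {n ι κ B : Type*} [Semiring B]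

open Classical in
/-- Splits the indices of a tensor power into those of the factors selected by `e` and those of the
remaining factors. -/
def splitAlong (e : ι ↪ κ) : (κ → n) ≃ (ι → n) × ({j // j ∉ Set.range e} → n) :=
  (Equiv.piEquivPiSubtypeProd (· ∈ Set.range e) fun _ => n).trans <|
    ((Equiv.ofInjective e e.injective).symm.arrowCongr (Equiv.refl n)).prodCongr (Equiv.refl _)

variable [Fintype n] [DecidableEq n] [Fintype ι] [DecidableEq ι] [Fintype κ] [DecidableEq κ]

open Classical in
/-- The operator `X ⊗ I` in which `X` acts on the tensor factors selected by `e`. The tensor product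
with `I` is a block-diagonal matrix, because Kronecker products of matrices are multiplicative only
over commutative coefficients. -/
def actOn (e : ι ↪ κ) : Matrix (ι → n) (ι → n) B →+* Matrix (κ → n) (κ → n) B :=
  ((Matrix.reindexRingEquiv B (splitAlong e).symm).toRingHom.comp
    (Matrix.blockDiagonalRingHom (ι → n) ({j // j ∉ Set.range e} → n) B)).comp
      (Pi.constRingHom _ _)

theorem actOn_apply (e : ι ↪ κ) (X : Matrix (ι → n) (ι → n) B) (f g : κ → n)
    [Decidable (∀ j ∉ Set.range e, f j = g j)] :
    actOn e X f g = if ∀ j ∉ Set.range e, f j = g j then X (f ∘ e) (g ∘ e) else 0 := by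
  have hsplit (f : κ → n) : splitAlong e f = (f ∘ e, fun j => f j.1) := rfl
  have hoff : (∀ j ∉ Set.range e, f j = g j) ↔
      (fun j : {j // j ∉ Set.range e} => f j.1) = fun j => g j.1 :=
    ⟨fun h => funext fun j => h j.1 j.2, fun h j hj => congrFun h ⟨j, hj⟩⟩
  change Matrix.blockDiagonal (fun _ => X) (splitAlong e f) (splitAlong e g) = _
  rw [Matrix.blockDiagonal_apply, hsplit f, hsplit g]
  exact if_congr hoff.symm rfl rfl

variable {ι' : Type*} [Fintype ι'] [DecidableEq ι']

theorem actOn_mul_actOn_apply_of_disjoint (e : ι ↪ κ) (e' : ι' ↪ κ)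
    (hdisj : Disjoint (Set.range e) (Set.range e')) (X : Matrix (ι → n) (ι → n) B)
    (Y : Matrix (ι' → n) (ι' → n) B) (f g : κ → n)
    [Decidable (∀ j ∉ Set.range e ∪ Set.range e', f j = g j)] :
    (actOn e X * actOn e' Y) f g =
      if ∀ j ∉ Set.range e ∪ Set.range e', f j = g j then
        X (f ∘ e) (g ∘ e) * Y (f ∘ e') (g ∘ e') else 0 := by
  classical
  -- The only intermediate index that can contribute follows `g` on the factors of `e` and `f` on
  -- all others.
  let h : κ → n := (Set.range e).piecewise g f
  have h_on {j} (hj : j ∈ Set.range e) : h j = g j := Set.piecewise_eq_of_mem _ _ _ hj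
  have h_off {j} (hj : j ∉ Set.range e) : h j = f j := Set.piecewise_eq_of_notMem _ _ _ hj
  have h_comp : h ∘ e = g ∘ e := funext fun x => h_on ⟨x, rfl⟩
  have h_comp' : h ∘ e' = f ∘ e' :=
    funext fun y => h_off (hdisj.notMem_of_mem_right ⟨y, rfl⟩)
  have h_agree : (∀ j ∉ Set.range e', h j = g j) ↔
      ∀ j ∉ Set.range e ∪ Set.range e', f j = g j := by
    refine forall_congr' fun j => ?_
    by_cases hj : j ∈ Set.range e
    · simp only [h_on hj, Set.mem_union, hj, true_or, not_true, implies_true, false_imp_iff]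
    · simp only [h_off hj, Set.mem_union, hj, false_or]
  rw [Matrix.mul_apply, Fintype.sum_eq_single h]
  · simp only [actOn_apply, h_comp, h_comp', h_agree, mul_ite, mul_zero]
    rw [if_pos fun j hj => (h_off hj).symm]
  · intro h' hne
    obtain ⟨j, hj⟩ := Function.ne_iff.mp hne
    rw [actOn_apply, actOn_apply]
    by_cases hje : j ∈ Set.range e
    · have h_ne : ¬ ∀ j ∉ Set.range e', h' j = g j := fun H =>
        hj ((H j (hdisj.notMem_of_mem_left hje)).trans (h_on hje).symm)
      rw [if_neg h_ne, mul_zero]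
    · have h_ne : ¬ ∀ j ∉ Set.range e, f j = h' j := fun H =>
        hj ((H j hje).symm.trans (h_off hje).symm)
      rw [if_neg h_ne, zero_mul]

theorem commute_actOn_of_disjoint {e : ι ↪ κ} {e' : ι' ↪ κ}
    (hdisj : Disjoint (Set.range e) (Set.range e')) {X : Matrix (ι → n) (ι → n) B}
    {Y : Matrix (ι' → n) (ι' → n) B} (hXY : ∀ a b c d, Commute (X a b) (Y c d)) :
    Commute (actOn e X) (actOn e' Y) := by
  classical
  ext f g
  rw [actOn_mul_actOn_apply_of_disjoint e e' hdisj,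
    actOn_mul_actOn_apply_of_disjoint e' e hdisj.symm, (hXY _ _ _ _).eq]
  exact if_congr (by rw [Set.union_comm]) rfl rfl

theorem map_actOn {C F : Type*} [Semiring C] [FunLike F B C] [RingHomClass F B C] (φ : F)
    (e : ι ↪ κ) (X : Matrix (ι → n) (ι → n) B) : (actOn e X).map φ = actOn e (X.map φ) := by
  ext f g
  simp only [Matrix.map_apply, actOn_apply, apply_ite φ, map_zero]

end ActOn

theorem forall_iff_forall_notMem_range_and {ι κ : Type*} (e : ι → κ) {P : κ → Prop} :
    (∀ j, P j) ↔ (∀ j ∉ Set.range e, P j) ∧ ∀ x, P (e x) := by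
  refine ⟨fun H => ⟨fun j _ => H j, fun x => H _⟩, fun ⟨hout, hin⟩ j => ?_⟩
  by_cases hj : j ∈ Set.range e
  · obtain ⟨x, rfl⟩ := hj
    exact hin x
  · exact hout j hj

section Window

/-- The embedding of `m` consecutive tensor factors, the first of which has (0-based) index `i`. -/
def window {i m k : ℕ} (h : i + m ≤ k) : Fin m ↪ Fin k :=
  (Fin.natAddEmb i).trans (Fin.castLEEmb h)

@[simp]
theorem val_window {i m k : ℕ} (h : i + m ≤ k) (x : Fin m) : (window h x).val = i + x := rfl

theorem mem_range_window {i m k : ℕ} {h : i + m ≤ k} {j : Fin k} :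
    j ∈ Set.range (window h) ↔ i ≤ j ∧ j < i + m := by
  constructor
  · rintro ⟨x, rfl⟩
    simp
  · rintro ⟨hij, hjm⟩
    exact ⟨⟨j - i, by omega⟩, Fin.ext (by simp only [val_window]; omega)⟩

theorem disjoint_range_window {i m i' m' k : ℕ} (h : i + m ≤ k) (h' : i' + m' ≤ k)
    (hle : i + m ≤ i') : Disjoint (Set.range (window h)) (Set.range (window h')) := by
  refine Set.disjoint_left.mpr fun j hj hj' => ?_
  rw [mem_range_window] at hj hj'
  omega

end Window

section TensorFactors

variable {N : ℕ} {A : Type*} [Ring A]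

theorem embR_eq_actOn_window (R : RMat N) {i l m k : ℕ} (h : i + m ≤ k) (hl : l + 1 < m) :
    embR k R (i + l) = actOn (window h) (embR m R l) := by
  ext f g
  have hk : i + l + 1 < k := by omega
  rw [actOn_apply]
  simp only [embR, dif_pos hk, dif_pos hl]
  rw [← ite_and]
  refine if_congr ?_ rfl rfl
  rw [forall_iff_forall_notMem_range_and (window h)]
  refine and_congr (forall₂_congr fun j hj => ?_) (forall_congr' fun x => ?_)
  · rw [mem_range_window] at hj
    have hj_ne : (j : ℕ) ≠ i + l ∧ (j : ℕ) ≠ i + l + 1 := by omega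
    simp only [hj_ne, ne_eq, not_false_eq_true, forall_const]
  · simp only [val_window, Function.comp_apply, ne_eq, add_assoc, add_right_inj]

theorem emb1_eq_actOn_window (X : Matrix (Fin N) (Fin N) A) {m k : ℕ} (h : 0 + m ≤ k)
    (hm : 0 < m) : emb1 k X = actOn (window h) (emb1 m X) := by
  ext f g
  have hk : 0 < k := by omega
  rw [actOn_apply]
  simp only [emb1, dif_pos hk, dif_pos hm]
  rw [← ite_and]
  refine if_congr ?_ rfl rfl
  rw [forall_iff_forall_notMem_range_and (window h)]
  refine and_congr (forall₂_congr fun j hj => ?_) (forall_congr' fun x => ?_)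
  · rw [mem_range_window] at hj
    have hj_ne : (j : ℕ) ≠ 0 := by omega
    simp only [hj_ne, ne_eq, not_false_eq_true, forall_const]
  · simp only [val_window, Function.comp_apply, zero_add]

theorem embR_two (R : RMat N) :
    embR 2 R 0 = Matrix.reindexRingEquiv ℂ (finTwoArrowEquiv (Fin N)).symm R := by
  ext f g
  rw [embR, dif_pos (by norm_num), if_pos fun j _ _ => by omega]
  rfl

theorem embR_mul_embR_eq_one {R S : RMat N} (h : R * S = 1) {k i : ℕ} (hi : i + 2 ≤ k) :
    embR k R i * embR k S i = 1 := by
  rw [← add_zero i, embR_eq_actOn_window R hi one_lt_two, embR_eq_actOn_window S hi one_lt_two,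
    ← map_mul, embR_two, embR_two, ← map_mul, h, map_one, map_one]

theorem IsBraiding.embR_braid {R : RMat N} (h : IsBraiding R) {k i : ℕ} (hi : i + 3 ≤ k) :
    embR k R i * embR k R (i + 1) * embR k R i =
      embR k R (i + 1) * embR k R i * embR k R (i + 1) := by
  have hact := congrArg (actOn (window hi)) h
  simpa only [map_mul, ← embR_eq_actOn_window R hi (l := 0) (by norm_num),
    ← embR_eq_actOn_window R hi (l := 1) (by norm_num), add_zero] using hact

variable [Algebra ℂ A]

theorem liftC_mul {k : ℕ} (X Y : TMat N k ℂ) : liftC A (X * Y) = liftC A X * liftC A Y :=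
  map_mul (algebraMap ℂ A).mapMatrix X Y

theorem liftC_one {k : ℕ} : liftC A (1 : TMat N k ℂ) = 1 :=
  map_one (algebraMap ℂ A).mapMatrix

theorem liftC_actOn {m k : ℕ} (e : Fin m ↪ Fin k) (X : TMat N m ℂ) :
    liftC A (actOn e X) = actOn e (liftC A X) :=
  map_actOn (algebraMap ℂ A) e X

theorem liftC_embR_mul_eq_one {R S : RMat N} (h : R * S = 1) {k i : ℕ} (hi : i + 2 ≤ k) :
    liftC A (embR k R i) * liftC A (embR k S i) = 1 := by
  rw [← liftC_mul, embR_mul_embR_eq_one h hi, liftC_one]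

theorem isUnit_liftC_embR {R S : RMat N} (h : R * S = 1) {k i : ℕ} (hi : i + 2 ≤ k) :
    IsUnit (liftC A (embR k R i)) :=
  ⟨⟨_, _, liftC_embR_mul_eq_one h hi, liftC_embR_mul_eq_one (mul_eq_one_comm.mp h) hi⟩, rfl⟩

theorem IsBraiding.liftC_embR_braid {R : RMat N} (h : IsBraiding R) {k i : ℕ} (hi : i + 3 ≤ k) :
    liftC A (embR k R i) * liftC A (embR k R (i + 1)) * liftC A (embR k R i) =
      liftC A (embR k R (i + 1)) * liftC A (embR k R i) * liftC A (embR k R (i + 1)) := by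
  simp only [← liftC_mul, h.embR_braid hi]

theorem commute_actOn_window_liftC_embR {i m j k : ℕ} (h : i + m ≤ k) (hij : i + m ≤ j)
    (hj : j + 2 ≤ k) (X : TMat N m A) (S : RMat N) :
    Commute (actOn (window h) X) (liftC A (embR k S j)) := by
  rw [← add_zero j, embR_eq_actOn_window S hj one_lt_two, liftC_actOn]
  exact commute_actOn_of_disjoint (disjoint_range_window h hj hij) fun a b c d =>
    (Algebra.commutes _ _).symm

theorem commute_liftC_embR {i j k : ℕ} (hij : i + 2 ≤ j) (hj : j + 2 ≤ k) (R S : RMat N) :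
    Commute (liftC A (embR k R i)) (liftC A (embR k S j)) := by
  have h : i + 2 ≤ k := by omega
  rw [← add_zero i, embR_eq_actOn_window R h one_lt_two, liftC_actOn]
  exact commute_actOn_window_liftC_embR h hij hj _ S

theorem commute_emb1_liftC_embR {j k : ℕ} (h0j : 0 < j) (hj : j + 2 ≤ k)
    (M : Matrix (Fin N) (Fin N) A) (S : RMat N) : Commute (emb1 k M) (liftC A (embR k S j)) := by
  have h : 0 + 1 ≤ k := by omega
  rw [emb1_eq_actOn_window M h one_pos]
  exact commute_actOn_window_liftC_embR h h0j hj _ S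

theorem commute_copyX_liftC_embR (R Rinv S : RMat N) (M : Matrix (Fin N) (Fin N) A) {i j k : ℕ}
    (hij : i < j) (hj : j + 2 ≤ k) : Commute (copyX k R Rinv M i) (liftC A (embR k S j)) := by
  induction i with
  | zero => exact commute_emb1_liftC_embR hij hj M S
  | succ i ih =>
    exact ((commute_liftC_embR hij hj R S).mul_left (ih (by omega))).mul_left
      (commute_liftC_embR hij hj Rinv S)

end TensorFactors

section HigherCopies

variable {N : ℕ} {A : Type*} [Ring A] [Algebra ℂ A] {R Rinv : RMat N}
  {M : Matrix (Fin N) (Fin N) A}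

theorem RERel.reflectionEq_emb1 (h : RERel R M) {k : ℕ} (hk : 0 + 2 ≤ k) :
    ReflectionEq (liftC A (embR k R 0)) (emb1 k M) := by
  have hact := ReflectionEq.map (actOn (window hk)) h
  rwa [← liftC_actOn, ← embR_eq_actOn_window R hk one_lt_two,
    ← emb1_eq_actOn_window M hk two_pos] at hact

theorem semiconjBy_copyX_succ (hinv : R * Rinv = 1) (M : Matrix (Fin N) (Fin N) A) {k i : ℕ}
    (hi : i + 3 ≤ k) :
    SemiconjBy (liftC A (embR k R i) * liftC A (embR k R (i + 1)))
      (copyX k R Rinv M i) (copyX k R Rinv M (i + 1)) :=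
  (semiconjBy_conj_of_mul_eq_one
    (liftC_embR_mul_eq_one (mul_eq_one_comm.mp hinv) (by omega)) _).mul_left
      (commute_copyX_liftC_embR R Rinv R M i.lt_succ_self hi).symm

theorem RERel.reflectionEq_copyX (hRE : RERel R M) (hinv : R * Rinv = 1) (hbr : IsBraiding R)
    {k i : ℕ} (hi : i + 2 ≤ k) :
    ReflectionEq (liftC A (embR k R i)) (copyX k R Rinv M i) := by
  induction i with
  | zero => exact hRE.reflectionEq_emb1 hi
  | succ i ih =>
    have hunit : IsUnit (liftC A (embR k R i) * liftC A (embR k R (i + 1))) :=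
      (isUnit_liftC_embR hinv (by omega)).mul (isUnit_liftC_embR hinv hi)
    exact (ih (by omega)).of_semiconjBy hunit
      (semiconjBy_mul_of_braid (hbr.liftC_embR_braid hi)) (semiconjBy_copyX_succ hinv M hi)

end HigherCopies

theorem statement0_general {N : ℕ} (R Rinv : RMat N) (hinv : R * Rinv = 1) (hbr : IsBraiding R)
    {A : Type*} [Ring A] [Algebra ℂ A] (M : Matrix (Fin N) (Fin N) A) (hRE : RERel R M)
    {k i : ℕ} (hi : i + 2 ≤ k) :
    liftC A (embR k R i) * copyX k R Rinv M i * copyX k R Rinv M (i + 1) =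
      copyX k R Rinv M i * copyX k R Rinv M (i + 1) * liftC A (embR k R i) := by
  rw [mul_assoc]
  exact ((hRE.reflectionEq_copyX hinv hbr hi).commute_mul_conj (liftC_embR_mul_eq_one hinv hi)
    (liftC_embR_mul_eq_one (mul_eq_one_comm.mp hinv) hi)).eq

/-- higher-copy form of the Reflection Equation:
for all `p ≥ 1`, `R_p M_{p̄} M_{\overline{p+1}} = M_{p̄} M_{\overline{p+1}} R_p`
as `N^{p+1} × N^{p+1}` matrices over `𝒜`. -/
theorem statement0 {N : ℕ} (R Rinv : RMat N) (q : ℂ)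
    (hq0 : q ≠ 0) (hq1 : q ≠ 1) (hqm1 : q ≠ -1)
    (hinv : R * Rinv = 1) (hinv' : Rinv * R = 1)
    (hbr : IsBraiding R) (hH : HeckeCond R q)
    {A : Type _} [Ring A] [Algebra ℂ A]
    (M : Matrix (Fin N) (Fin N) A) (hRE : RERel R M) :
    ∀ p : ℕ, 1 ≤ p →
      liftC A (embR (p + 1) R (p - 1)) * copyX (p + 1) R Rinv M (p - 1) *
          copyX (p + 1) R Rinv M p
        = copyX (p + 1) R Rinv M (p - 1) * copyX (p + 1) R Rinv M p *
            liftC A (embR (p + 1) R (p - 1)) := by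
  intro p hp
  obtain ⟨i, rfl⟩ := Nat.exists_eq_add_of_le' hp
  exact statement0_general R Rinv hinv hbr M hRE le_rfl
end
end

section
/- (Matrix Capelli identity, symmetric form.) Let R be a Hecke symmetry with parameter q such that j_q ≠ 0 for 2 ≤ j ≤ k, let M and D be N×N matrices with entries in a unital associative ℂ-algebra 𝒜 satisfying the Reflection Equation R M₁ R M₁ = M₁ R M₁ R, the relation R⁻¹ D₁ R⁻¹ D₁ = D₁ R⁻¹ D₁ R⁻¹, and the permutation relations D₁ R M₁ = R M₁ R⁻¹ D₁ R⁻¹ + I, and set L := M D. Then for every k ≥ 1, as an identity of N^k×N^k matrices over 𝒜: S^(k) L_{1̄} (L_{2̄} − q⁻¹·I) (L_{3̄} − q⁻²·2_q·I) ⋯ (L_{k̄} − q^{−(k−1)}·(k−1)_q·I) S^(k) = q^{−k(k−1)} S^(k) M_{1̄} ⋯ M_{k̄} D_{k̄} ⋯ D_{1̄}. -/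
open Matrix BigOperators

noncomputable section

/-!
Absorbing one generator of the Hecke algebra at a time into the symmetrizer `S^(n+1)`, one moves
the product `D_{n̄} ⋯ D_{1̄}` past `L_{\overline{n+1}}`: in each step the permutation relation
replaces `D R M` by `R M R⁻¹ D R⁻¹ + I`. The inhomogeneous terms add up to
`q^{-1} + q^{-3} + ⋯ + q^{-(2n-1)} = q^{-n} n_q`, which is the scalar subtracted from
`L_{\overline{n+1}}` in the Capelli product, so that the identity follows by induction on `n`.

Only the relations of the Hecke algebra, the commutation of `M_{1̄}` and `D_{1̄}` with
`R₂, R₃, …`, the two reflection equations and the permutation relation enter this argument, which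
therefore takes place in an arbitrary algebra. To return to matrices, operators on two or three
tensor legs are moved to other legs of `(ℂ^N)^{⊗k}` by ring homomorphisms.
-/

section QNumbers

variable {q : ℂ}

theorem ne_zero_of_sub_inv_ne_zero {K : Type*} [DivisionRing K] {q : K} (hq : q - q⁻¹ ≠ 0) :
    q ≠ 0 := by
  rintro rfl
  simp at hq

theorem qNum_zero : qNum q 0 = 0 := by simp [qNum]

theorem qNum_one (hq : q - q⁻¹ ≠ 0) : qNum q 1 = 1 := by simp [qNum, div_self hq]

theorem qNum_succ (hq : q - q⁻¹ ≠ 0) (n : ℕ) :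
    qNum q (n + 1) = q⁻¹ ^ n + q * qNum q n := by
  unfold qNum
  rw [div_eq_iff hq, add_mul, mul_assoc, div_mul_cancel₀ _ hq]
  ring

/-- The scalar `q^{-i} i_q` subtracted from the `(i+1)`-st factor of the symmetric Capelli
product. -/
def capelliShift (q : ℂ) (i : ℕ) : ℂ := q⁻¹ ^ i * qNum q i

theorem capelliShift_zero : capelliShift q 0 = 0 := by simp [capelliShift, qNum_zero]

theorem capelliShift_succ (hq : q - q⁻¹ ≠ 0) (n : ℕ) :
    capelliShift q (n + 1) = q⁻¹ ^ (2 * n + 1) + capelliShift q n := by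
  rw [capelliShift, capelliShift, qNum_succ hq]
  linear_combination q⁻¹ ^ n * qNum q n * inv_mul_cancel₀ (ne_zero_of_sub_inv_ne_zero hq)

end QNumbers

section OrderedProducts

variable {B : Type*} [Monoid B]

/-- The product `x₀ x₁ ⋯ xₙ₋₁`. -/
def ascProd (x : ℕ → B) (n : ℕ) : B := ((List.range n).map x).prod

/-- The product `xₙ₋₁ ⋯ x₁ x₀`. -/
def descProd (x : ℕ → B) (n : ℕ) : B := ((List.range n).reverse.map x).prod

theorem ascProd_zero (x : ℕ → B) : ascProd x 0 = 1 := rfl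

theorem descProd_zero (x : ℕ → B) : descProd x 0 = 1 := rfl

theorem ascProd_succ (x : ℕ → B) (n : ℕ) : ascProd x (n + 1) = ascProd x n * x n :=
  List.prod_range_succ x n

theorem descProd_succ (x : ℕ → B) (n : ℕ) : descProd x (n + 1) = x n * descProd x n := by
  simp [descProd, List.range_succ]

theorem commute_ascProd {a : B} {x : ℕ → B} {n : ℕ} (h : ∀ i < n, Commute a (x i)) :
    Commute a (ascProd x n) :=
  Commute.list_prod_right _ _ (by simpa using h)

theorem commute_descProd {a : B} {x : ℕ → B} {n : ℕ} (h : ∀ i < n, Commute a (x i)) :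
    Commute a (descProd x n) :=
  Commute.list_prod_right _ _ (by simpa using h)

end OrderedProducts

section BraidGroup

open ConjAct

variable {B : Type*} [Monoid B] {k : ℕ} {r : ℕ → Bˣ}

/-- The units `r₀, …, r_{k-2}` satisfy the relations of the braid group on `k` strands. The
sequence is total to avoid dependent indices; commutation of distant terms is required of all
of it. -/
structure IsBraidRep (k : ℕ) (r : ℕ → Bˣ) : Prop where
  braid : ∀ i, i + 2 < k → r i * r (i + 1) * r i = r (i + 1) * r i * r (i + 1)
  commute : ∀ i j, i + 1 < j → Commute (r i) (r j)

/-- The copies `x_{1̄}, x_{2̄}, …` of an element `x = x_{1̄}`, indexed from `0`. -/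
def copies (r : ℕ → Bˣ) (x : B) : ℕ → B
  | 0 => x
  | i + 1 => r i * copies r x i * ↑(r i)⁻¹

theorem copies_succ (r : ℕ → Bˣ) (x : B) (i : ℕ) :
    copies r x (i + 1) = r i * copies r x i * ↑(r i)⁻¹ := rfl

theorem copies_succ_eq_smul (r : ℕ → Bˣ) (x : B) (i : ℕ) :
    copies r x (i + 1) = toConjAct (r i) • copies r x i := rfl

/-- `x` is fixed by every generator but the first, like an operator on the first tensor leg. -/
def IsFirstLeg (r : ℕ → Bˣ) (x : B) : Prop := ∀ i, 1 ≤ i → Commute (r i : B) x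

theorem IsFirstLeg.mul {x y : B} (hx : IsFirstLeg r x) (hy : IsFirstLeg r y) :
    IsFirstLeg r (x * y) :=
  fun i hi => (hx i hi).mul_right (hy i hi)

theorem smul_eq_self_of_commute {u : Bˣ} {x : B} (h : Commute (u : B) x) :
    toConjAct u • x = x := by
  rw [units_smul_def, ofConjAct_toConjAct, h.eq, Units.mul_inv_cancel_right]

namespace IsBraidRep

theorem coe_commute (hr : IsBraidRep k r) {i j : ℕ} (hij : i + 1 < j) :
    Commute (r i : B) (r j) :=
  (hr.commute i j hij).map (Units.coeHom B)

theorem commute_copies_of_lt (hr : IsBraidRep k r) {x : B} (hx : IsFirstLeg r x) {i j : ℕ}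
    (hji : j < i) : Commute (r i : B) (copies r x j) := by
  induction j with
  | zero => exact hx i hji
  | succ j ih =>
    have hij : Commute (r i : B) (r j) := (hr.coe_commute hji).symm
    exact (hij.mul_right (ih (by lia))).mul_right hij.units_inv_right

theorem coe_braid (hr : IsBraidRep k r) {i : ℕ} (hi : i + 2 < k) :
    (r i * r (i + 1) * r i : B) = r (i + 1) * r i * r (i + 1) :=
  mod_cast hr.braid i hi

theorem smul_gen (hr : IsBraidRep k r) {i : ℕ} (hi : i + 2 < k) :
    toConjAct (r i * r (i + 1)) • (r i : B) = r (i + 1) := by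
  rw [units_smul_def, ofConjAct_toConjAct, Units.mul_inv_eq_iff_eq_mul, Units.val_mul,
    hr.coe_braid hi, mul_assoc]

theorem smul_gen_succ (hr : IsBraidRep k r) {i : ℕ} (hi : i + 2 < k) :
    toConjAct (r (i + 1) * r i) • (r (i + 1) : B) = r i := by
  rw [units_smul_def, ofConjAct_toConjAct, Units.mul_inv_eq_iff_eq_mul, Units.val_mul,
    ← hr.coe_braid hi, mul_assoc]

theorem commute_copies_of_add_one_lt (hr : IsBraidRep k r) {x : B} (hx : IsFirstLeg r x)
    {i j : ℕ} (hij : i + 1 < j) (hj : j < k) : Commute (r i : B) (copies r x j) := by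
  induction j, hij using Nat.le_induction with
  | base =>
    have h : Commute (r (i + 1) : B) (copies r x i) := hr.commute_copies_of_lt hx (by lia)
    have h' := h.map (MulDistribMulAction.toMonoidHom B (toConjAct (r (i + 1) * r i)))
    rwa [MulDistribMulAction.toMonoidHom_apply, MulDistribMulAction.toMonoidHom_apply,
      hr.smul_gen_succ hj, toConjAct_mul, mul_smul, ← copies_succ_eq_smul,
      ← copies_succ_eq_smul] at h'
  | succ j hij ih =>
    have hij' : Commute (r i : B) (r j) := hr.coe_commute hij
    exact (hij'.mul_right (ih (by lia))).mul_right hij'.units_inv_right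

/-- Relations between `r₀` and first copies are thereby transported to `rᵢ` and the
`(i+1)`-st copies. -/
theorem exists_conj_smul (hr : IsBraidRep k r) {i : ℕ} (hi : i + 1 < k) :
    ∃ w : ConjAct Bˣ, w • (r 0 : B) = r i ∧ w • (↑(r 0)⁻¹ : B) = ↑(r i)⁻¹ ∧
      ∀ x : B, IsFirstLeg r x → w • x = copies r x i := by
  induction i with
  | zero => exact ⟨1, one_smul _ _, one_smul _ _, fun x _ => one_smul _ x⟩
  | succ i ih =>
    obtain ⟨w, hw, hw', hwx⟩ := ih (by lia)
    have hsmul := hr.smul_gen hi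
    refine ⟨toConjAct (r i * r (i + 1)) * w, ?_, ?_, fun x hx => ?_⟩
    · rw [mul_smul, hw, hsmul]
    · rw [mul_smul, hw', ← Units.mul_eq_one_iff_eq_inv, ← hsmul, ← smul_mul',
        Units.inv_mul, smul_one]
    · rw [mul_smul, hwx x hx, toConjAct_mul, mul_smul,
        smul_eq_self_of_commute (hr.commute_copies_of_lt hx i.lt_succ_self), copies_succ_eq_smul]

end IsBraidRep

end BraidGroup

section HeckeAlgebra

variable {B : Type*} [Ring B] [Algebra ℂ B] {q : ℂ} {k : ℕ} {r : ℕ → Bˣ}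

/-- The units `r₀, …, r_{k-2}` satisfy the relations of the Hecke algebra `H_k(q)`. -/
structure IsHeckeRep (q : ℂ) (k : ℕ) (r : ℕ → Bˣ) : Prop extends IsBraidRep k r where
  hecke : ∀ i, i + 1 < k → (r i * r i : B) = (q - q⁻¹) • (r i : B) + 1

/-- The middle factor `q^{-(n+1)} + (n+1)_q rₙ` in the recursion for the symmetrizers. -/
def symmetrizerFactor (q : ℂ) (r : ℕ → Bˣ) (n : ℕ) : B :=
  q⁻¹ ^ (n + 1) • (1 : B) + qNum q (n + 1) • (r n : B)

/-- The symmetrizers `S^(n)` in the algebra generated by `r₀, r₁, …`. -/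
def symmetrizer (q : ℂ) (r : ℕ → Bˣ) : ℕ → B
  | 0 => 1
  | 1 => 1
  | n + 2 => (qNum q (n + 2))⁻¹ • (symmetrizer q r (n + 1) * symmetrizerFactor q r n *
      symmetrizer q r (n + 1))

theorem symmetrizer_zero : symmetrizer q r 0 = 1 := rfl

theorem symmetrizer_one : symmetrizer q r 1 = 1 := rfl

theorem symmetrizer_add_two (n : ℕ) :
    symmetrizer q r (n + 2) = (qNum q (n + 2))⁻¹ •
      (symmetrizer q r (n + 1) * symmetrizerFactor q r n * symmetrizer q r (n + 1)) := rfl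

theorem commute_symmetrizer {a : B} {n : ℕ} (h : ∀ i, i + 1 < n → Commute a (r i)) :
    Commute a (symmetrizer q r n) := by
  induction n using Nat.twoStepInduction with
  | zero | one => exact Commute.one_right _
  | more n _ ih =>
    have hS := ih fun i hi => h i (by lia)
    have hfactor : Commute a (symmetrizerFactor q r n) :=
      ((Commute.one_right a).smul_right _).add_right ((h n (by lia)).smul_right _)
    exact ((hS.mul_right hfactor).mul_right hS).smul_right _

theorem symmetrizer_mul_symmetrizer_succ {n : ℕ} (h : IsIdempotentElem (symmetrizer q r n)) :
    symmetrizer q r n * symmetrizer q r (n + 1) = symmetrizer q r (n + 1) := by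
  cases n with
  | zero => exact one_mul _
  | succ n => rw [symmetrizer_add_two, mul_smul_comm, ← mul_assoc, ← mul_assoc, h.eq]

theorem symmetrizer_succ_mul_symmetrizer {n : ℕ} (h : IsIdempotentElem (symmetrizer q r n)) :
    symmetrizer q r (n + 1) * symmetrizer q r n = symmetrizer q r (n + 1) := by
  cases n with
  | zero => exact mul_one _
  | succ n => rw [symmetrizer_add_two, smul_mul_assoc, mul_assoc, h.eq]

theorem inv_mul_eq_of_mul_eq {u : Bˣ} {x : B} (hq₀ : q ≠ 0) (h : (u : B) * x = q • x) :
    ↑u⁻¹ * x = q⁻¹ • x := by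
  rw [Units.inv_mul_eq_iff_eq_mul, mul_smul_comm, h, inv_smul_smul₀ hq₀]

theorem IsBraidRep.gen_mul_mul_mul_of_absorb (hr : IsBraidRep k r) {i : ℕ} (hi : i + 2 < k) {x : B}
    (hx : (r i : B) * x = q • x) :
    (r (i + 1) : B) * (r i * r (i + 1) * x) = q • (r i * r (i + 1) * x) := by
  rw [← mul_assoc, ← mul_assoc, ← hr.coe_braid hi, mul_assoc _ _ x, hx, mul_smul_comm]

namespace IsHeckeRep

theorem gen_mul_inv_smul_add (hr : IsHeckeRep q k r) (hq₀ : q ≠ 0) {i : ℕ}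
    (hi : i + 1 < k) (x : B) : (r i : B) * (q⁻¹ • x + r i * x) = q • (q⁻¹ • x + r i * x) := by
  rw [mul_add, ← mul_assoc, hr.hecke i hi, mul_smul_comm, smul_add, smul_inv_smul₀ hq₀,
    add_mul, one_mul, smul_mul_assoc]
  module

/-- On a vector `x` with `rₙ x = q x`, consecutive symmetrizer factors act as a combination of two
eigenvectors of `rₙ₊₁`: one by the Hecke relation and one by the braid relation. -/
theorem symmetrizerFactor_mul_symmetrizerFactor (hq : q - q⁻¹ ≠ 0) {n : ℕ} {x : B}
    (hx : (r n : B) * x = q • x) :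
    symmetrizerFactor q r n * symmetrizerFactor q r (n + 1) * x =
      (q⁻¹ ^ (n + 1) * qNum q (n + 2)) • (q⁻¹ • x + r (n + 1) * x) +
        (qNum q (n + 1) * qNum q (n + 2)) • (r n * r (n + 1) * x) := by
  simp only [symmetrizerFactor, add_mul, mul_add, smul_mul_assoc, mul_smul_comm, one_mul, mul_one,
    hx]
  rw [qNum_succ hq (n + 1)]
  match_scalars
  · ring
  · ring
  · ring

theorem gen_mul_symmetrizer_two (hr : IsHeckeRep q k r) (hq : q - q⁻¹ ≠ 0)
    (hk : 1 < k) : (r 0 : B) * symmetrizer q r 2 = q • symmetrizer q r 2 := by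
  have h := hr.gen_mul_inv_smul_add (ne_zero_of_sub_inv_ne_zero hq) hk 1
  rw [mul_one] at h
  rw [symmetrizer_add_two, symmetrizer_one, one_mul, mul_one, symmetrizerFactor, zero_add,
    qNum_one hq, pow_one, one_smul, mul_smul_comm, h, smul_comm]

theorem gen_mul_symmetrizer_top (hr : IsHeckeRep q k r) (hq : q - q⁻¹ ≠ 0) {n : ℕ}
    (hn : n + 2 < k) (hidem : IsIdempotentElem (symmetrizer q r (n + 1)))
    (habs : (r n : B) * symmetrizer q r (n + 2) = q • symmetrizer q r (n + 2)) :
    (r (n + 1) : B) * symmetrizer q r (n + 3) = q • symmetrizer q r (n + 3) := by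
  set S : B := symmetrizer q r (n + 1)
  set T : B := symmetrizer q r (n + 2)
  set F : B := symmetrizerFactor q r n
  set G : B := symmetrizerFactor q r (n + 1)
  have hrS : Commute (r (n + 1) : B) S :=
    commute_symmetrizer fun i hi => (hr.coe_commute (by lia)).symm
  have hGS : Commute G S :=
    ((Commute.one_left S).smul_left _).add_left (hrS.smul_left _)
  have hTGT : T * G * T = (qNum q (n + 2))⁻¹ • (S * (F * G * T)) := by
    calc T * G * T = (qNum q (n + 2))⁻¹ • (S * F * (S * G) * T) := by
          conv_lhs => enter [1, 1]; rw [show T = _ from symmetrizer_add_two n]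
          simp only [smul_mul_assoc, mul_assoc, S, F]
      _ = (qNum q (n + 2))⁻¹ • (S * (F * G * (S * T))) := by
          rw [← hGS.eq]; simp only [mul_assoc]
      _ = (qNum q (n + 2))⁻¹ • (S * (F * G * T)) := by
          rw [symmetrizer_mul_symmetrizer_succ hidem]
  have heigen : (r (n + 1) : B) * (F * G * T) = q • (F * G * T) := by
    rw [symmetrizerFactor_mul_symmetrizerFactor hq habs, mul_add, mul_smul_comm, mul_smul_comm,
      hr.gen_mul_inv_smul_add (ne_zero_of_sub_inv_ne_zero hq) hn,
      hr.gen_mul_mul_mul_of_absorb hn habs]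
    module
  rw [symmetrizer_add_two (n + 1), show _ * _ * _ = _ from hTGT, mul_smul_comm, mul_smul_comm,
    ← mul_assoc, hrS.eq, mul_assoc, heigen, mul_smul_comm, smul_comm q, smul_comm q]

theorem gen_mul_symmetrizer_succ (hr : IsHeckeRep q k r) (hq : q - q⁻¹ ≠ 0)
    {n : ℕ} (hn : n + 1 < k) (hidem : IsIdempotentElem (symmetrizer q r n))
    (habs : ∀ i, i + 1 < n + 1 → (r i : B) * symmetrizer q r (n + 1) = q • symmetrizer q r (n + 1))
    {i : ℕ} (hi : i + 1 < n + 2) :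
    (r i : B) * symmetrizer q r (n + 2) = q • symmetrizer q r (n + 2) := by
  obtain hlt | rfl : i < n ∨ i = n := by lia
  · rw [symmetrizer_add_two, mul_smul_comm, ← mul_assoc, ← mul_assoc, habs i (by lia),
      smul_mul_assoc, smul_mul_assoc, smul_comm]
  · cases i with
    | zero => exact hr.gen_mul_symmetrizer_two hq hn
    | succ n => exact hr.gen_mul_symmetrizer_top hq hn hidem (habs n (by lia))

theorem isIdempotentElem_symmetrizer_succ (hq : q - q⁻¹ ≠ 0) {n : ℕ}
    (hnum : qNum q (n + 2) ≠ 0) (hidem : IsIdempotentElem (symmetrizer q r (n + 1)))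
    (habs : (r n : B) * symmetrizer q r (n + 2) = q • symmetrizer q r (n + 2)) :
    IsIdempotentElem (symmetrizer q r (n + 2)) := by
  set S : B := symmetrizer q r (n + 1)
  set T : B := symmetrizer q r (n + 2)
  have hST : S * T = T := symmetrizer_mul_symmetrizer_succ hidem
  have hfactor : symmetrizerFactor q r n * T = qNum q (n + 2) • T := by
    rw [symmetrizerFactor, add_mul, smul_mul_assoc, smul_mul_assoc, habs, one_mul,
      qNum_succ hq (n + 1)]
    module
  calc T * T = (qNum q (n + 2))⁻¹ • (S * (symmetrizerFactor q r n * (S * T))) := by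
        conv_lhs => enter [1]; rw [show T = _ from symmetrizer_add_two n]
        simp only [smul_mul_assoc, mul_assoc, S]
    _ = T := by rw [hST, hfactor, mul_smul_comm, hST, inv_smul_smul₀ hnum]

theorem isIdempotentElem_symmetrizer_and_gen_mul (hr : IsHeckeRep q k r) (hq : q - q⁻¹ ≠ 0)
    {n : ℕ} (hn : n ≤ k) (hnum : ∀ j, 2 ≤ j → j ≤ n → qNum q j ≠ 0) :
    IsIdempotentElem (symmetrizer q r n) ∧
      ∀ i, i + 1 < n → (r i : B) * symmetrizer q r n = q • symmetrizer q r n := by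
  induction n using Nat.twoStepInduction with
  | zero | one => exact ⟨IsIdempotentElem.one, fun i hi => by lia⟩
  | more n ih ih' =>
    have hidem := (ih (by lia) fun j hj _ => hnum j hj (by lia)).1
    obtain ⟨hidem', habs'⟩ := ih' (by lia) fun j hj _ => hnum j hj (by lia)
    have habs (i : ℕ) (hi : i + 1 < n + 2) :=
      hr.gen_mul_symmetrizer_succ hq hn hidem habs' hi
    exact ⟨isIdempotentElem_symmetrizer_succ hq (hnum _ (by lia) le_rfl) hidem'
      (habs n (by lia)), habs⟩

end IsHeckeRep

/-- The symmetric Capelli product `l_{1̄} (l_{2̄} - q⁻¹) (l_{3̄} - q⁻² 2_q) ⋯` of `n` factors. -/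
def capelliProd (q : ℂ) (r : ℕ → Bˣ) (l : B) (n : ℕ) : B :=
  ascProd (fun i => copies r l i - capelliShift q i • (1 : B)) n

theorem IsBraidRep.symmetrizer_mul_capelliProd_succ_mul_symmetrizer
    (hr : IsBraidRep k r) {l : B} (hl : IsFirstLeg r l) {n : ℕ} (hn : n < k)
    (hidem : IsIdempotentElem (symmetrizer q r n)) :
    symmetrizer q r (n + 1) * capelliProd q r l (n + 1) * symmetrizer q r (n + 1) =
      symmetrizer q r (n + 1) * (symmetrizer q r n * capelliProd q r l n * symmetrizer q r n) *
        (copies r l n - capelliShift q n • (1 : B)) * symmetrizer q r (n + 1) := by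
  set E : B := symmetrizer q r (n + 1)
  set S : B := symmetrizer q r n
  set X : B := copies r l n - capelliShift q n • (1 : B)
  have hXS : Commute X S :=
    (commute_symmetrizer fun i hi => (hr.commute_copies_of_add_one_lt hl hi hn).symm).sub_left
      ((Commute.one_left S).smul_left _)
  calc E * capelliProd q r l (n + 1) * E
      = E * S * (capelliProd q r l n * X) * (S * E) := by
        rw [symmetrizer_succ_mul_symmetrizer hidem, symmetrizer_mul_symmetrizer_succ hidem,
          capelliProd, ascProd_succ, capelliProd]
    _ = E * (S * (capelliProd q r l n * (X * S))) * E := by simp only [mul_assoc]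
    _ = E * (S * capelliProd q r l n * S) * X * E := by rw [hXS.eq]; simp only [mul_assoc]

end HeckeAlgebra

section CapelliPair

variable {B : Type*}

section Monoid

variable [Monoid B] {u : Bˣ} {x : B}

theorem commute_mul_conj_of_reflection (h : u * x * u * x = x * u * x * u) :
    Commute (u : B) (x * (u * x * ↑u⁻¹)) := by
  simp only [Commute, SemiconjBy, ← mul_assoc, h, Units.mul_inv_cancel_right,
    Units.inv_mul_cancel_right]

theorem mul_inv_mul_of_reflection_inv (h : ↑u⁻¹ * x * ↑u⁻¹ * x = x * ↑u⁻¹ * x * ↑u⁻¹) :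
    x * ↑u⁻¹ * x = u * x * ↑u⁻¹ * x * ↑u⁻¹ := by
  simpa only [mul_assoc, Units.mul_inv_cancel_left] using congrArg ((u : B) * ·) h

theorem commute_conj_mul_of_reflection_inv (h : ↑u⁻¹ * x * ↑u⁻¹ * x = x * ↑u⁻¹ * x * ↑u⁻¹) :
    Commute (u : B) (u * x * ↑u⁻¹ * x) := by
  rw [Commute, SemiconjBy, ← Units.mul_inv_eq_iff_eq_mul, mul_assoc (u : B) _ ↑u⁻¹,
    ← mul_inv_mul_of_reflection_inv h]
  simp only [mul_assoc]

end Monoid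

variable [Ring B] {k : ℕ} {r : ℕ → Bˣ} {m d : B}

/-- The first copies `m = M_{1̄}` and `d = D_{1̄}` of a matrix of coordinates and a matrix of
derivatives: each of them satisfies a reflection equation, and they satisfy the permutation
relations. -/
structure IsCapelliPair (k : ℕ) (r : ℕ → Bˣ) (m d : B) : Prop where
  left_isFirstLeg : IsFirstLeg r m
  right_isFirstLeg : IsFirstLeg r d
  reflection : 1 < k → r 0 * m * r 0 * m = m * r 0 * m * r 0
  reflection_inv : 1 < k → ↑(r 0)⁻¹ * d * ↑(r 0)⁻¹ * d = d * ↑(r 0)⁻¹ * d * ↑(r 0)⁻¹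
  permutation : 1 < k → d * r 0 * m = r 0 * m * ↑(r 0)⁻¹ * d * ↑(r 0)⁻¹ + 1

namespace IsCapelliPair

theorem reflection_copies (hp : IsCapelliPair k r m d) (hr : IsBraidRep k r) {i : ℕ}
    (hi : i + 1 < k) :
    r i * copies r m i * r i * copies r m i = copies r m i * r i * copies r m i * r i := by
  obtain ⟨w, hw, -, hwx⟩ := hr.exists_conj_smul hi
  simpa only [smul_mul', hw, hwx m hp.left_isFirstLeg] using
    congrArg (w • ·) (hp.reflection (by lia))

theorem reflection_inv_copies (hp : IsCapelliPair k r m d) (hr : IsBraidRep k r) {i : ℕ}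
    (hi : i + 1 < k) :
    ↑(r i)⁻¹ * copies r d i * ↑(r i)⁻¹ * copies r d i =
      copies r d i * ↑(r i)⁻¹ * copies r d i * ↑(r i)⁻¹ := by
  obtain ⟨w, -, hw, hwx⟩ := hr.exists_conj_smul hi
  simpa only [smul_mul', hw, hwx d hp.right_isFirstLeg] using
    congrArg (w • ·) (hp.reflection_inv (by lia))

theorem permutation_copies (hp : IsCapelliPair k r m d) (hr : IsBraidRep k r) {i : ℕ}
    (hi : i + 1 < k) :
    copies r d i * r i * copies r m i = copies r m (i + 1) * copies r d i * ↑(r i)⁻¹ + 1 := by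
  obtain ⟨w, hw, hw', hwx⟩ := hr.exists_conj_smul hi
  simpa only [copies_succ, smul_mul', smul_add, smul_one, hw, hw', hwx m hp.left_isFirstLeg,
    hwx d hp.right_isFirstLeg] using congrArg (w • ·) (hp.permutation (by lia))

theorem commute_ascProd_copies_left (hp : IsCapelliPair k r m d) (hr : IsBraidRep k r) {i n : ℕ}
    (hi : i + 1 < n) (hn : n ≤ k) : Commute (r i : B) (ascProd (copies r m) n) := by
  induction n, hi using Nat.le_induction with
  | base =>
    rw [ascProd_succ, ascProd_succ, mul_assoc]
    exact (commute_ascProd fun j hj => hr.commute_copies_of_lt hp.left_isFirstLeg hj).mul_right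
      (commute_mul_conj_of_reflection (hp.reflection_copies hr hn))
  | succ n hi ih =>
    rw [ascProd_succ]
    exact (ih (by lia)).mul_right (hr.commute_copies_of_add_one_lt hp.left_isFirstLeg hi hn)

theorem commute_descProd_copies_right (hp : IsCapelliPair k r m d) (hr : IsBraidRep k r)
    {i n : ℕ} (hi : i + 1 < n) (hn : n ≤ k) : Commute (r i : B) (descProd (copies r d) n) := by
  induction n, hi using Nat.le_induction with
  | base =>
    rw [descProd_succ, descProd_succ, ← mul_assoc]
    exact (commute_conj_mul_of_reflection_inv (hp.reflection_inv_copies hr hn)).mul_right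
      (commute_descProd fun j hj => hr.commute_copies_of_lt hp.right_isFirstLeg hj)
  | succ n hi ih =>
    rw [descProd_succ]
    exact (hr.commute_copies_of_add_one_lt hp.right_isFirstLeg hi hn).mul_right (ih (by lia))

section MoveGenerator

variable [Algebra ℂ B] {q : ℂ} {n : ℕ} {E : B}

theorem right_mul_gen_mul_left_mul_descProd (hp : IsCapelliPair k r m d) (hr : IsBraidRep k r)
    (hq₀ : q ≠ 0) (hn : n + 1 < k) (hE : (r n : B) * E = q • E) :
    copies r d n * r n * (copies r m n * descProd (copies r d) (n + 1) * E) =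
      q⁻¹ • (copies r m (n + 1) * descProd (copies r d) (n + 2) * E) +
        descProd (copies r d) (n + 1) * E := by
  set D : B := descProd (copies r d) n
  have hrD : Commute (↑(r n)⁻¹ : B) D :=
    (commute_descProd fun j hj => hr.commute_copies_of_lt hp.right_isFirstLeg hj).units_inv_left
  have hdd : copies r d n * ↑(r n)⁻¹ * copies r d n =
      copies r d (n + 1) * copies r d n * ↑(r n)⁻¹ :=
    mul_inv_mul_of_reflection_inv (hp.reflection_inv_copies hr hn)
  have hdD : copies r d n * ↑(r n)⁻¹ * (copies r d n * D * E) =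
      q⁻¹ • (copies r d (n + 1) * (copies r d n * D) * E) := by
    calc copies r d n * ↑(r n)⁻¹ * (copies r d n * D * E)
        = copies r d n * ↑(r n)⁻¹ * copies r d n * (D * E) := by simp only [mul_assoc]
      _ = copies r d (n + 1) * copies r d n * (↑(r n)⁻¹ * D * E) := by
        rw [hdd]; simp only [mul_assoc]
      _ = q⁻¹ • (copies r d (n + 1) * (copies r d n * D) * E) := by
        rw [hrD.eq, mul_assoc D, inv_mul_eq_of_mul_eq hq₀ hE]
        simp only [mul_smul_comm, mul_assoc]
  calc copies r d n * r n * (copies r m n * descProd (copies r d) (n + 1) * E)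
      = copies r d n * r n * copies r m n * (copies r d n * D * E) := by
        rw [descProd_succ]; simp only [mul_assoc, D]
    _ = copies r m (n + 1) * (copies r d n * ↑(r n)⁻¹ * (copies r d n * D * E)) +
          copies r d n * D * E := by
        rw [hp.permutation_copies hr hn, add_mul, one_mul]; simp only [mul_assoc]
    _ = _ := by
        rw [hdD, descProd_succ _ (n + 1), descProd_succ]; simp only [mul_smul_comm, mul_assoc, D]

theorem right_mul_gen_mul_descProd (hp : IsCapelliPair k r m d) (hr : IsBraidRep k r)
    (hE : (r n : B) * E = q • E) :
    copies r d n * r n * (descProd (copies r d) n * E) =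
      q • (descProd (copies r d) (n + 1) * E) := by
  have hrD : Commute (r n : B) (descProd (copies r d) n) :=
    commute_descProd fun j hj => hr.commute_copies_of_lt hp.right_isFirstLeg hj
  rw [mul_assoc, ← mul_assoc (r n : B), hrD.eq, mul_assoc _ (r n : B), hE, descProd_succ]
  simp only [mul_smul_comm, mul_assoc]

theorem descProd_succ_mul_copies_succ (hp : IsCapelliPair k r m d) (hr : IsBraidRep k r)
    (hq₀ : q ≠ 0) (hE : (r n : B) * E = q • E) (x : B) :
    descProd (copies r d) (n + 1) * copies r x (n + 1) * E =
      q⁻¹ • (copies r d n * r n * (descProd (copies r d) n * copies r x n * E)) := by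
  have hrD : Commute (r n : B) (descProd (copies r d) n) :=
    commute_descProd fun j hj => hr.commute_copies_of_lt hp.right_isFirstLeg hj
  calc descProd (copies r d) (n + 1) * copies r x (n + 1) * E
      = copies r d n * (descProd (copies r d) n * r n) * (copies r x n * (↑(r n)⁻¹ * E)) := by
        rw [descProd_succ, copies_succ]; simp only [mul_assoc]
    _ = _ := by
        rw [← hrD.eq, inv_mul_eq_of_mul_eq hq₀ hE]; simp only [mul_smul_comm, mul_assoc]

theorem descProd_mul_copies_mul (hp : IsCapelliPair k r m d) (hr : IsBraidRep k r)
    (hq : q - q⁻¹ ≠ 0) (hn : n < k) (hE : ∀ i < n, (r i : B) * E = q • E) :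
    descProd (copies r d) n * copies r (m * d) n * E =
      q⁻¹ ^ (2 * n) • (copies r m n * descProd (copies r d) (n + 1) * E) +
        capelliShift q n • (descProd (copies r d) n * E) := by
  induction n with
  | zero => simp [descProd_succ, descProd_zero, capelliShift_zero, copies]
  | succ n ih =>
    have hq₀ := ne_zero_of_sub_inv_ne_zero hq
    have hEn := hE n n.lt_succ_self
    -- The second term of the permutation relation produces the increment of the shift.
    rw [hp.descProd_succ_mul_copies_succ hr hq₀ hEn, ih (by lia) fun i hi => hE i (by lia),
      mul_add, mul_smul_comm, mul_smul_comm,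
      hp.right_mul_gen_mul_left_mul_descProd hr hq₀ hn hEn, hp.right_mul_gen_mul_descProd hr hEn,
      capelliShift_succ hq]
    match_scalars
    · ring
    · linear_combination capelliShift q n * inv_mul_cancel₀ hq₀

end MoveGenerator

section CapelliProduct

variable [Algebra ℂ B] {q : ℂ} {n : ℕ}

theorem descProd_mul_copies_sub_mul (hp : IsCapelliPair k r m d) (hr : IsBraidRep k r)
    (hq : q - q⁻¹ ≠ 0) (hn : n < k) {E : B} (hE : ∀ i < n, (r i : B) * E = q • E) :
    descProd (copies r d) n * (copies r (m * d) n - capelliShift q n • (1 : B)) * E =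
      q⁻¹ ^ (2 * n) • (copies r m n * descProd (copies r d) (n + 1) * E) := by
  rw [mul_sub, sub_mul, hp.descProd_mul_copies_mul hr hq hn hE, mul_smul_comm, mul_one,
    smul_mul_assoc, add_sub_cancel_right]

theorem commute_symmetrizer_ascProd_mul_descProd (hp : IsCapelliPair k r m d)
    (hr : IsBraidRep k r) (hn : n ≤ k) :
    Commute (symmetrizer q r n) (ascProd (copies r m) n * descProd (copies r d) n) :=
  (commute_symmetrizer fun _ hi => ((hp.commute_ascProd_copies_left hr hi hn).mul_right
    (hp.commute_descProd_copies_right hr hi hn)).symm).symm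

theorem symmetrizer_mul_capelliProd_mul_symmetrizer (hp : IsCapelliPair k r m d)
    (hr : IsHeckeRep q k r) (hq : q - q⁻¹ ≠ 0) (hn : n ≤ k)
    (hnum : ∀ j, 2 ≤ j → j ≤ n → qNum q j ≠ 0) :
    symmetrizer q r n * capelliProd q r (m * d) n * symmetrizer q r n =
      q⁻¹ ^ (n * (n - 1)) •
        (symmetrizer q r n * ascProd (copies r m) n * descProd (copies r d) n) := by
  induction n with
  | zero => simp [symmetrizer_zero, capelliProd, ascProd_zero, descProd_zero]
  | succ n ih =>
    have hnum' : ∀ j, 2 ≤ j → j ≤ n → qNum q j ≠ 0 := fun j hj hjn => hnum j hj (by lia)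
    obtain ⟨hidem, -⟩ := hr.isIdempotentElem_symmetrizer_and_gen_mul hq (Nat.le_of_succ_le hn) hnum'
    obtain ⟨hidem', habs⟩ := hr.isIdempotentElem_symmetrizer_and_gen_mul hq hn hnum
    have hcomm : Commute (symmetrizer q r (n + 1)) _ :=
      hp.commute_symmetrizer_ascProd_mul_descProd hr.toIsBraidRep hn
    have hstep := hp.descProd_mul_copies_sub_mul hr.toIsBraidRep hq hn
      fun i hi => habs i (Nat.succ_lt_succ hi)
    have hES := symmetrizer_succ_mul_symmetrizer hidem
    set E : B := symmetrizer q r (n + 1)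
    set S : B := symmetrizer q r n
    set X : B := copies r (m * d) n - capelliShift q n • (1 : B)
    set P : ℕ → B := ascProd (copies r m)
    set D : ℕ → B := descProd (copies r d)
    calc E * capelliProd q r (m * d) (n + 1) * E
        = E * (S * capelliProd q r (m * d) n * S) * X * E :=
          hr.symmetrizer_mul_capelliProd_succ_mul_symmetrizer
            (hp.left_isFirstLeg.mul hp.right_isFirstLeg) hn hidem
      _ = q⁻¹ ^ (n * (n - 1)) • (E * S * P n * (D n * X * E)) := by
          rw [ih (Nat.le_of_succ_le hn) hnum']; simp only [smul_mul_assoc, mul_smul_comm, mul_assoc]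
      _ = (q⁻¹ ^ (n * (n - 1)) * q⁻¹ ^ (2 * n)) • (E * (P (n + 1) * D (n + 1) * E)) := by
          rw [hES, hstep, mul_smul_comm, smul_smul, show P (n + 1) = _ from ascProd_succ _ n]
          simp only [mul_assoc, P]
      _ = q⁻¹ ^ ((n + 1) * n) • (E * P (n + 1) * D (n + 1)) := by
          rw [← hcomm.eq, ← mul_assoc, hidem'.eq, mul_assoc, ← pow_add]
          congr 2
          cases n <;> lia

end CapelliProduct

end IsCapelliPair

end CapelliPair

section TensorLegs

variable {ι κ ν n A : Type*}

open Classical in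
/-- The splitting of a multi-index on the tensor legs `κ` into its part on the legs in the image of
`σ` and the remaining part. -/
def legSplitEquiv (n : Type*) (σ : ι ↪ κ) :
    (κ → n) ≃ (ι → n) × ({j // j ∉ Set.range σ} → n) :=
  (Equiv.piEquivPiSubtypeProd (· ∈ Set.range σ) fun _ => n).trans
    (((Equiv.ofInjective σ σ.injective).symm.arrowCongr (Equiv.refl n)).prodCongr (Equiv.refl _))

variable [Fintype ι] [DecidableEq ι] [Fintype κ] [DecidableEq κ] [Fintype n] [DecidableEq n]
  [Semiring A]

open Classical in
/-- The operator on the tensor legs `κ` that acts as `X` on the legs selected by `σ` and as the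
identity on the others. -/
def legEmbedding (σ : ι ↪ κ) : Matrix (ι → n) (ι → n) A →+* Matrix (κ → n) (κ → n) A :=
  (reindexRingEquiv A (legSplitEquiv n σ).symm).toRingHom.comp
    ((blockDiagonalRingHom _ _ A).comp (Pi.constRingHom _ _))

theorem legEmbedding_apply (σ : ι ↪ κ) (X : Matrix (ι → n) (ι → n) A) (f g : κ → n)
    [Decidable (∀ j ∉ Set.range σ, f j = g j)] :
    legEmbedding σ X f g = if ∀ j ∉ Set.range σ, f j = g j then X (f ∘ σ) (g ∘ σ) else 0 := by
  change (if _ = _ then _ else _) = _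
  refine if_congr ?_ rfl rfl
  simp [legSplitEquiv, funext_iff]

theorem legEmbedding_smul {S : Type*} [SMulZeroClass S A] (c : S) (σ : ι ↪ κ)
    (X : Matrix (ι → n) (ι → n) A) : legEmbedding σ (c • X) = c • legEmbedding σ X := by
  classical
  ext f g
  simp only [Matrix.smul_apply, legEmbedding_apply, smul_ite, smul_zero]

theorem map_legEmbedding {C : Type*} [Semiring C] (φ : A →+* C) (σ : ι ↪ κ)
    (X : Matrix (ι → n) (ι → n) A) :
    φ.mapMatrix (legEmbedding σ X) = legEmbedding σ (φ.mapMatrix X) := by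
  classical
  ext f g
  simp only [RingHom.mapMatrix_apply, map_apply, legEmbedding_apply, apply_ite φ, map_zero]

theorem legEmbedding_legEmbedding [Fintype ν] [DecidableEq ν] (σ : ι ↪ κ) (τ : κ ↪ ν)
    (X : Matrix (ι → n) (ι → n) A) :
    legEmbedding τ (legEmbedding σ X) = legEmbedding (σ.trans τ) X := by
  classical
  ext f g
  simp only [legEmbedding_apply]
  rw [← ite_and]
  refine if_congr ⟨fun ⟨hκ, hι⟩ j hj => ?_, fun h => ⟨fun j hj => h j ?_, fun i hi => h (τ i) ?_⟩⟩
    rfl rfl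
  · by_cases hjτ : j ∈ Set.range τ
    · obtain ⟨i, rfl⟩ := hjτ
      exact hι i fun ⟨a, ha⟩ => hj ⟨a, congrArg τ ha⟩
    · exact hκ j hjτ
  · exact fun ⟨a, ha⟩ => hj ⟨σ a, ha⟩
  · exact fun ⟨a, ha⟩ => hi ⟨a, τ.injective ha⟩

theorem legEmbedding_mul_legEmbedding_apply [Fintype ν] [DecidableEq ν] {σ : ι ↪ κ} {τ : ν ↪ κ}
    (hστ : Disjoint (Set.range σ) (Set.range τ)) (X : Matrix (ι → n) (ι → n) A)
    (Y : Matrix (ν → n) (ν → n) A) (f g : κ → n)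
    [Decidable (∀ j, j ∉ Set.range σ → j ∉ Set.range τ → f j = g j)] :
    (legEmbedding σ X * legEmbedding τ Y) f g =
      if ∀ j, j ∉ Set.range σ → j ∉ Set.range τ → f j = g j then
        X (f ∘ σ) (g ∘ σ) * Y (f ∘ τ) (g ∘ τ) else 0 := by
  classical
  set h₀ := (Set.range σ).piecewise g f
  have hσ : ∀ j ∈ Set.range σ, h₀ j = g j := fun j hj => Set.piecewise_eq_of_mem _ _ _ hj
  have hσ' : ∀ j ∉ Set.range σ, h₀ j = f j := fun j hj => Set.piecewise_eq_of_notMem _ _ _ hj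
  have h₀σ : h₀ ∘ σ = g ∘ σ := funext fun i => hσ _ ⟨i, rfl⟩
  have h₀τ : h₀ ∘ τ = f ∘ τ := funext fun i => hσ' _ (Set.disjoint_right.1 hστ ⟨i, rfl⟩)
  rw [mul_apply, Finset.sum_eq_single h₀ (fun h _ hne => ?_) (by simp), legEmbedding_apply,
    legEmbedding_apply, if_pos fun j hj => (hσ' j hj).symm, mul_ite, mul_zero, h₀σ, h₀τ]
  · refine if_congr ⟨fun H j hj hj' => by rw [← hσ' j hj, H j hj'], fun H j hj => ?_⟩ rfl rfl
    by_cases hjσ : j ∈ Set.range σ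
    · exact hσ j hjσ
    · rw [hσ' j hjσ, H j hjσ hj]
  · by_contra hterm
    simp only [legEmbedding_apply, ite_mul, mul_ite, zero_mul, mul_zero, ite_eq_right_iff,
      not_forall] at hterm
    obtain ⟨hhg, hfh, -⟩ := hterm
    refine hne (funext fun j => ?_)
    by_cases hj : j ∈ Set.range σ
    · rw [hσ j hj, hhg j (Set.disjoint_left.1 hστ hj)]
    · rw [hσ' j hj, hfh j hj]

theorem commute_legEmbedding [Fintype ν] [DecidableEq ν] {σ : ι ↪ κ} {τ : ν ↪ κ}
    (hστ : Disjoint (Set.range σ) (Set.range τ)) {X : Matrix (ι → n) (ι → n) A}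
    {Y : Matrix (ν → n) (ν → n) A} (h : ∀ a b c d, Commute (X a b) (Y c d)) :
    Commute (legEmbedding σ X) (legEmbedding τ Y) := by
  classical
  ext f g
  rw [legEmbedding_mul_legEmbedding_apply hστ, legEmbedding_mul_legEmbedding_apply hστ.symm,
    (h _ _ _ _).eq]
  exact if_congr (forall_congr' fun _ => forall_comm) rfl rfl

/-- The `p` consecutive legs `i, …, i + p - 1`. -/
def consecutiveLegs {p i k : ℕ} (h : i + p ≤ k) : Fin p ↪ Fin k :=
  (Fin.natAddEmb i).trans (Fin.castLEEmb h)

theorem mem_range_consecutiveLegs {p i k : ℕ} (h : i + p ≤ k) (j : Fin k) :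
    j ∈ Set.range (consecutiveLegs h) ↔ i ≤ j ∧ j < i + p := by
  refine ⟨?_, fun hj => ⟨⟨j - i, by lia⟩, Fin.ext (Nat.add_sub_of_le hj.1)⟩⟩
  rintro ⟨a, rfl⟩
  simp [consecutiveLegs]

theorem disjoint_range_consecutiveLegs {p i p' i' k : ℕ} (h : i + p ≤ k) (h' : i' + p' ≤ k)
    (hlt : i + p ≤ i') :
    Disjoint (Set.range (consecutiveLegs h)) (Set.range (consecutiveLegs h')) := by
  rw [Set.disjoint_left]
  intro j hj hj'
  rw [mem_range_consecutiveLegs] at hj hj'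
  lia

theorem consecutiveLegs_trans {p i k i' l : ℕ} (h : i + p ≤ k) (h' : i' + k ≤ l)
    (h'' : i' + i + p ≤ l) :
    (consecutiveLegs h).trans (consecutiveLegs h') = consecutiveLegs h'' := by
  ext j
  simp [consecutiveLegs, add_assoc]

end TensorLegs

section TensorPower

variable {N p k : ℕ} {A : Type*}

theorem embR_eq_legEmbedding (R : RMat N) {i : ℕ} (h : i + 2 ≤ k) :
    embR k R i = legEmbedding (consecutiveLegs h)
      (reindexAlgEquiv ℂ ℂ (finTwoArrowEquiv (Fin N)).symm R) := by
  classical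
  ext f g
  have hlegs : (∀ j ∉ Set.range (consecutiveLegs h), f j = g j) ↔
      ∀ j : Fin k, j.val ≠ i → j.val ≠ i + 1 → f j = g j :=
    forall_congr' fun j => by
      rw [mem_range_consecutiveLegs, ← and_imp]
      exact imp_congr_left (by lia)
  simp only [legEmbedding_apply, hlegs, embR, dif_pos (show i + 1 < k from h)]
  rfl

theorem embR_of_lt (R : RMat N) {i : ℕ} (h : k < i + 2) : embR k R i = 1 := by
  ext f g
  rw [embR, dif_neg (by lia)]

theorem legEmbedding_embR (R : RMat N) {i j : ℕ} (h : i + p ≤ k) (hj : j + 2 ≤ p) :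
    legEmbedding (consecutiveLegs h) (embR p R j) = embR k R (i + j) := by
  rw [embR_eq_legEmbedding R hj, embR_eq_legEmbedding R (i := i + j) (by lia),
    legEmbedding_legEmbedding, consecutiveLegs_trans]

variable [Ring A]

theorem emb1_eq_legEmbedding (X : Matrix (Fin N) (Fin N) A) (h : 0 + 1 ≤ k) :
    emb1 k X = legEmbedding (consecutiveLegs h)
      (reindexRingEquiv A (Equiv.funUnique (Fin 1) (Fin N)).symm X) := by
  classical
  ext f g
  have hlegs : (∀ j ∉ Set.range (consecutiveLegs h), f j = g j) ↔
      ∀ j : Fin k, j.val ≠ 0 → f j = g j :=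
    forall_congr' fun j => by
      rw [mem_range_consecutiveLegs]
      exact imp_congr_left (by lia)
  simp only [legEmbedding_apply, hlegs, emb1, dif_pos (show 0 < k from h)]
  rfl

theorem legEmbedding_emb1 (X : Matrix (Fin N) (Fin N) A) (h : 0 + p ≤ k) (hp : 0 < p) :
    legEmbedding (consecutiveLegs h) (emb1 p X) = emb1 k X := by
  rw [emb1_eq_legEmbedding X (by lia), emb1_eq_legEmbedding X (by lia),
    legEmbedding_legEmbedding, consecutiveLegs_trans]

theorem emb1_mul (X Y : Matrix (Fin N) (Fin N) A) (hk : 0 < k) :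
    emb1 k (X * Y) = emb1 k X * emb1 k Y := by
  simp only [emb1_eq_legEmbedding _ (show 0 + 1 ≤ k by lia), map_mul]

variable [Algebra ℂ A]

theorem liftC_eq_mapMatrix (X : TMat N k ℂ) : liftC A X = (Algebra.ofId ℂ A).mapMatrix X := rfl

theorem legEmbedding_liftC (σ : Fin p ↪ Fin k) (X : TMat N p ℂ) :
    legEmbedding σ (liftC A X) = liftC A (legEmbedding σ X) :=
  (map_legEmbedding (algebraMap ℂ A) σ X).symm

/-- The map `X ↦ Xᵢ` into the operators on the tensor power, as a homomorphism; like `embR`, it is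
trivial when `i` is out of range. -/
def embRHom (N k : ℕ) (A : Type*) [Ring A] [Algebra ℂ A] (i : ℕ) : RMat N →* TMat N k A where
  toFun X := liftC A (embR k X i)
  map_one' := by
    rcases lt_or_ge k (i + 2) with h | h
    · rw [embR_of_lt _ h, liftC_eq_mapMatrix, map_one]
    · rw [embR_eq_legEmbedding _ h, map_one, map_one, liftC_eq_mapMatrix, map_one]
  map_mul' X Y := by
    rcases lt_or_ge k (i + 2) with h | h
    · simp only [embR_of_lt _ h, liftC_eq_mapMatrix, map_one, mul_one]
    · simp only [embR_eq_legEmbedding _ h, map_mul, liftC_eq_mapMatrix]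

/-- The operators `R₁, R₂, …` on the tensor power, indexed from `0`. -/
def tensorGen (k : ℕ) (A : Type*) [Ring A] [Algebra ℂ A] (U : (RMat N)ˣ) (i : ℕ) :
    (TMat N k A)ˣ :=
  Units.map (embRHom N k A i) U

variable {U : (RMat N)ˣ} {q : ℂ}

theorem coe_tensorGen (i : ℕ) : (tensorGen k A U i : TMat N k A) = liftC A (embR k U i) := rfl

theorem coe_inv_tensorGen (i : ℕ) :
    (↑(tensorGen k A U i)⁻¹ : TMat N k A) = liftC A (embR k ↑U⁻¹ i) := rfl

theorem commute_tensorGen_legEmbedding {i : ℕ} (h : i + 2 ≤ k) {σ : Fin p ↪ Fin k}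
    (hσ : Disjoint (Set.range (consecutiveLegs h)) (Set.range σ)) (Y : TMat N p A) :
    Commute (tensorGen k A U i : TMat N k A) (legEmbedding σ Y) := by
  rw [coe_tensorGen, embR_eq_legEmbedding _ h, ← legEmbedding_liftC]
  exact commute_legEmbedding hσ fun _ _ _ _ => Algebra.commutes _ _

theorem isBraidRep_tensorGen (hbr : IsBraiding (U : RMat N)) :
    IsBraidRep k (tensorGen k A U) where
  braid i hi := by
    have h := congrArg (fun X => liftC A (legEmbedding (consecutiveLegs (i := i) hi) X)) hbr
    simp only [liftC_eq_mapMatrix, map_mul, legEmbedding_embR _ _ (Nat.le_refl 3),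
      legEmbedding_embR _ _ (Nat.le_succ 2), Nat.add_zero] at h
    exact Units.ext h
  commute i j hij := by
    refine Units.ext ?_
    rcases lt_or_ge k (j + 2) with hj | hj
    · simp only [Units.val_mul, coe_tensorGen, embR_of_lt _ hj, liftC_eq_mapMatrix, map_one,
        mul_one, one_mul]
    · rw [Units.val_mul, Units.val_mul, coe_tensorGen j, embR_eq_legEmbedding _ hj,
        ← legEmbedding_liftC]
      exact commute_tensorGen_legEmbedding (by lia) (disjoint_range_consecutiveLegs _ _ hij) _

theorem HeckeCond.mul_self {R : RMat N} (hR : HeckeCond R q) (hq₀ : q ≠ 0) :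
    R * R = (q - q⁻¹) • R + 1 := by
  have h : (1 : RMat N) + (q - q⁻¹) • R - R * R = 0 := by
    rw [← hR, sub_mul, mul_add, mul_add, smul_mul_smul_comm, mul_inv_cancel₀ hq₀]
    simp only [smul_mul_assoc, mul_smul_comm, one_mul, mul_one]
    module
  rw [← sub_eq_zero.1 h, add_comm]

theorem isHeckeRep_tensorGen (hq₀ : q ≠ 0) (hbr : IsBraiding (U : RMat N))
    (hU : HeckeCond (U : RMat N) q) : IsHeckeRep q k (tensorGen k A U) where
  toIsBraidRep := isBraidRep_tensorGen hbr
  hecke i hi := by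
    rw [coe_tensorGen, embR_eq_legEmbedding _ hi]
    simp only [liftC_eq_mapMatrix, ← map_mul, hU.mul_self hq₀]
    simp only [map_add, map_smul, map_one, legEmbedding_smul]

theorem isFirstLeg_emb1 (X : Matrix (Fin N) (Fin N) A) :
    IsFirstLeg (tensorGen k A U) (emb1 k X) := by
  intro i hi
  rcases lt_or_ge k (i + 2) with h | h
  · rw [coe_tensorGen, embR_of_lt _ h, liftC_eq_mapMatrix, map_one]
    exact Commute.one_left _
  · rw [emb1_eq_legEmbedding X (by lia)]
    exact commute_tensorGen_legEmbedding h (disjoint_range_consecutiveLegs _ _ hi).symm _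

theorem legEmbedding_liftC_embR (R : RMat N) (h : 0 + 2 ≤ k) :
    legEmbedding (consecutiveLegs h) (liftC A (embR 2 R 0)) = liftC A (embR k R 0) := by
  rw [legEmbedding_liftC, legEmbedding_embR _ _ le_rfl]

theorem isCapelliPair_emb1 {M D : Matrix (Fin N) (Fin N) A} (hRE : RERel (U : RMat N) M)
    (hDD : DDRel (↑U⁻¹ : RMat N) D) (hperm : PermRel (U : RMat N) ↑U⁻¹ M D) :
    IsCapelliPair k (tensorGen k A U) (emb1 k M) (emb1 k D) where
  left_isFirstLeg := isFirstLeg_emb1 M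
  right_isFirstLeg := isFirstLeg_emb1 D
  reflection hk := by
    have hk' : 0 + 2 ≤ k := by lia
    have h := congrArg (legEmbedding (consecutiveLegs hk')) hRE
    simpa only [coe_tensorGen, map_mul, legEmbedding_liftC_embR,
      legEmbedding_emb1 _ hk' two_pos] using h
  reflection_inv hk := by
    have hk' : 0 + 2 ≤ k := by lia
    have h := congrArg (legEmbedding (consecutiveLegs hk')) hDD
    simpa only [coe_tensorGen, coe_inv_tensorGen, map_mul, legEmbedding_liftC_embR,
      legEmbedding_emb1 _ hk' two_pos] using h
  permutation hk := by
    have hk' : 0 + 2 ≤ k := by lia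
    have h := congrArg (legEmbedding (consecutiveLegs hk')) hperm
    simpa only [coe_tensorGen, coe_inv_tensorGen, map_mul, map_add, map_one,
      legEmbedding_liftC_embR, legEmbedding_emb1 _ hk' two_pos] using h

theorem copyX_eq_copies (X : Matrix (Fin N) (Fin N) A) :
    copyX k (U : RMat N) ↑U⁻¹ X = copies (tensorGen k A U) (emb1 k X) := by
  ext1 i
  induction i with
  | zero => rfl
  | succ i ih => rw [copyX, ih, copies_succ, coe_tensorGen, coe_inv_tensorGen]

theorem upChain_eq_ascProd (X : Matrix (Fin N) (Fin N) A) (n : ℕ) :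
    upChain k (U : RMat N) ↑U⁻¹ X n = ascProd (copies (tensorGen k A U) (emb1 k X)) n := by
  rw [upChain, copyX_eq_copies, ascProd]

theorem downChain_eq_descProd (X : Matrix (Fin N) (Fin N) A) (n : ℕ) :
    downChain k (U : RMat N) ↑U⁻¹ X n = descProd (copies (tensorGen k A U) (emb1 k X)) n := by
  rw [downChain, copyX_eq_copies, descProd]

theorem capChainS_eq_capelliProd (X : Matrix (Fin N) (Fin N) A) (n : ℕ) :
    capChainS k (U : RMat N) ↑U⁻¹ q X n = capelliProd q (tensorGen k A U) (emb1 k X) n := by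
  rw [capChainS, copyX_eq_copies]
  rfl

theorem liftC_Ssym (n : ℕ) :
    liftC A (Ssym k (U : RMat N) q n) = symmetrizer q (tensorGen k A U) n := by
  induction n using Nat.twoStepInduction with
  | zero | one => exact map_one (Algebra.ofId ℂ A).mapMatrix
  | more n _ ih =>
    rw [symmetrizer_add_two, ← ih, symmetrizerFactor, coe_tensorGen, Ssym]
    simp only [liftC_eq_mapMatrix, map_smul, map_mul, map_add, map_one]

end TensorPower

/-- matrix Capelli identity, symmetric form:
`S^(k) L_{1̄}(L_{2̄}−q⁻¹I)⋯(L_{k̄}−q^{−(k−1)}(k−1)_q I) S^(k)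
  = q^{−k(k−1)} S^(k) M_{1̄}⋯M_{k̄} D_{k̄}⋯D_{1̄}`, with `L = MD`. -/
theorem statement3 {N : ℕ} (R Rinv : RMat N) (q : ℂ)
    (hq0 : q ≠ 0) (hq1 : q ≠ 1) (hqm1 : q ≠ -1)
    (hinv : R * Rinv = 1) (hinv' : Rinv * R = 1)
    (hbr : IsBraiding R) (hH : HeckeCond R q)
    {A : Type _} [Ring A] [Algebra ℂ A]
    (M D : Matrix (Fin N) (Fin N) A)
    (hRE : RERel R M) (hDD : DDRel Rinv D) (hperm : PermRel R Rinv M D) :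
    ∀ k : ℕ, 1 ≤ k → (∀ j : ℕ, 2 ≤ j → j ≤ k → qNum q j ≠ 0) →
      liftC A (Ssym k R q k) * capChainS k R Rinv q (M * D) k * liftC A (Ssym k R q k)
        = (q⁻¹ ^ (k * (k - 1))) •
            (liftC A (Ssym k R q k) * upChain k R Rinv M k * downChain k R Rinv D k) := by
  intro k hk hnum
  obtain ⟨U, rfl, rfl⟩ : ∃ U : (RMat N)ˣ, R = U ∧ Rinv = ↑U⁻¹ :=
    ⟨⟨R, Rinv, hinv, hinv'⟩, rfl, rfl⟩
  have hq : q - q⁻¹ ≠ 0 := by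
    rw [sub_ne_zero, ne_comm, Ne, inv_eq_self₀]
    tauto
  have hpair : IsCapelliPair k (tensorGen k A U) (emb1 k M) (emb1 k D) :=
    isCapelliPair_emb1 hRE hDD hperm
  have hrep : IsHeckeRep q k (tensorGen k A U) := isHeckeRep_tensorGen hq0 hbr hH
  rw [liftC_Ssym, capChainS_eq_capelliProd, upChain_eq_ascProd, downChain_eq_descProd,
    emb1_mul M D hk]
  exact hpair.symmetrizer_mul_capelliProd_mul_symmetrizer hrep hq le_rfl hnum
end
end
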